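/- For n ≥ 1, let η denote the element -1 ∈ M_n. The quotient of the complex group algebra ℂ[M_n] by the two-sided ideal generated by the element η + 1 (the sum in ℂ[M_n] of the basis element corresponding to η ∈ M_n and the identity) is isomorphic, as a ℂ-algebra, to the Clifford algebra of ℂ^n with quadratic form q(z) = -(z₁² + z₂² + ⋯ + z_n²). -/

import Mathlib

/-!
`Cl_m` is the Clifford algebra of `Q_m(x) = -(x,x)` on `ℝ^m`, with generators
`e_1, …, e_m`.  `M_n` is the subgroup of the unit group of `Cl_{n+1}` generated by
the elements `e_i e_{i+1}` for `1 ≤ i ≤ n`, and `η = -1 ∈ M_n`.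

Theorem: for `n ≥ 1`, the quotient of the complex group algebra `ℂ[M_n]` by the
two-sided ideal generated by `η + 1` (formalized as the `RingQuot` of the relation
identifying `η + 1` with `0`) is isomorphic as a `ℂ`-algebra to the Clifford
algebra of `ℂ^n` with the quadratic form `q(z) = -(z₁² + ⋯ + z_n²)`.
-/

noncomputable section

/-- The quadratic form `Q_m(x) = -(x, x)` on `ℝ^m`. -/
def Qneg (m : ℕ) : QuadraticForm ℝ (Fin m → ℝ) :=
  QuadraticMap.weightedSumSquares ℝ (fun _ : Fin m => (-1 : ℝ))

/-- The real Clifford algebra `Cl_m` of `Q_m`. -/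
abbrev Cl (m : ℕ) := CliffordAlgebra (Qneg m)

/-- The generator `e_i ∈ Cl_m`, the image of the `i`-th standard basis vector. -/
def eCl (m : ℕ) (i : Fin m) : Cl m := CliffordAlgebra.ι (Qneg m) (Pi.single i 1)

/-- `M_n`: the subgroup of the unit group of `Cl_{n+1}` generated by the elements
`e_i e_{i+1}`, `1 ≤ i ≤ n`. -/
def Mgrp (n : ℕ) : Subgroup (Cl (n + 1))ˣ :=
  Subgroup.closure {u : (Cl (n + 1))ˣ | ∃ i : Fin n,
    (u : Cl (n + 1)) = eCl (n + 1) i.castSucc * eCl (n + 1) i.succ}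

/-- The quadratic form `q(z) = -(z₁² + ⋯ + z_n²)` on `ℂ^n`. -/
def QnegC (n : ℕ) : QuadraticForm ℂ (Fin n → ℂ) :=
  QuadraticMap.weightedSumSquares ℂ (fun _ : Fin n => (-1 : ℂ))

/-!
`M_n` is generated by the `n` elements `e_1 e_{j+1}`, which square to `η` and commute up to a factor
`η`. In the quotient, where `η` acts as `-1`, they satisfy the Clifford relations, which gives a map
from the Clifford algebra of `ℂ^n`. Its inverse comes from the isomorphism of the even part of
`Cl_{n+1}` with `Cl_n` sending `e_1 e_{j+1}` to `e_j`: it carries `M_n` into the Clifford algebra of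
`ℂ^n` and `η` to `-1`.
-/

theorem sum_smul_mul_self_of_anticommute {I R A : Type*} [CommRing R] [Ring A] [Algebra R A]
    (s : Finset I) {a : I → A} (hanti : ∀ ⦃i j⦄, i ≠ j → a i * a j = -(a j * a i)) (z : I → R) :
    (∑ i ∈ s, z i • a i) * ∑ i ∈ s, z i • a i = ∑ i ∈ s, (z i * z i) • (a i * a i) := by
  classical
  have hpolar {i j : I} (hij : i ≠ j) :
      QuadraticMap.polar (QuadraticMap.sq (R := R) (A := A)) (z i • a i) (z j • a j) = 0 := by
    rw [QuadraticMap.polar_smul_left, QuadraticMap.polar_smul_right]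
    have h : QuadraticMap.polar (QuadraticMap.sq (R := R) (A := A)) (a i) (a j) =
        a i * a j + a j * a i := by
      simp only [QuadraticMap.polar, QuadraticMap.sq_apply]
      noncomm_ring
    rw [h, hanti hij, neg_add_cancel, smul_zero, smul_zero]
  rw [← QuadraticMap.sq_apply (R := R), QuadraticMap.map_sum]
  refine (add_eq_left.2 (Finset.sum_eq_zero ?_)).trans ?_
  · rintro ⟨i, j⟩ hij
    exact hpolar (Finset.mem_filter.1 hij).2
  · simp only [QuadraticMap.sq_apply, smul_mul_smul_comm]

/-- The Clifford algebra of the diagonal quadratic form `∑ i, w i * x i ^ 2` on `I → R`. -/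
abbrev DiagClifford {I R : Type*} [CommRing R] [Fintype I] (w : I → R) :=
  CliffordAlgebra (QuadraticMap.weightedSumSquares R w)

namespace DiagClifford

section Presentation

variable {I R A : Type*} [CommRing R] [Fintype I] [Ring A] [Algebra R A] {w : I → R}

/-- The universal property of a diagonal Clifford algebra: anticommuting elements with the
prescribed squares are the images of the generators under an algebra homomorphism. -/
def lift (a : I → A) (hsq : ∀ i, a i * a i = algebraMap R A (w i))
    (hanti : ∀ ⦃i j⦄, i ≠ j → a i * a j = -(a j * a i)) : DiagClifford w →ₐ[R] A :=
  CliffordAlgebra.lift _ ⟨Fintype.linearCombination R a, fun z => by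
    rw [Fintype.linearCombination_apply, sum_smul_mul_self_of_anticommute _ hanti]
    simp [hsq, Algebra.smul_def, Algebra.commutes]⟩

variable [DecidableEq I]

variable (w) in
/-- The generator of a diagonal Clifford algebra attached to a standard basis vector. -/
def gen (i : I) : DiagClifford w :=
  CliffordAlgebra.ι (QuadraticMap.weightedSumSquares R w) (Pi.single i 1)

variable (w) in
theorem gen_mul_self (i : I) : gen w i * gen w i = algebraMap R _ (w i) := by
  simp [gen, Pi.single_apply]

variable (w) in
theorem gen_mul_gen_of_ne {i j : I} (h : i ≠ j) : gen w i * gen w j = -(gen w j * gen w i) := by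
  refine CliffordAlgebra.ι_mul_ι_comm_of_isOrtho ?_
  simp only [QuadraticMap.isOrtho_def, QuadraticMap.weightedSumSquares_apply,
    ← Finset.sum_add_distrib]
  refine Finset.sum_congr rfl fun k _ => ?_
  obtain rfl | hki := eq_or_ne k i
  · simp [h]
  · simp [hki]

theorem lift_gen (a : I → A) (hsq : ∀ i, a i * a i = algebraMap R A (w i))
    (hanti : ∀ ⦃i j⦄, i ≠ j → a i * a j = -(a j * a i)) (i : I) :
    lift a hsq hanti (gen w i) = a i := by
  rw [lift, gen, CliffordAlgebra.lift_ι_apply, Fintype.linearCombination_apply_single, one_smul]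

theorem algHom_ext {f g : DiagClifford w →ₐ[R] A} (h : ∀ i, f (gen w i) = g (gen w i)) : f = g :=
  CliffordAlgebra.hom_ext (LinearMap.pi_ext' fun i => LinearMap.ext_ring (h i))

variable {S : Type*} [CommRing S] [Algebra R S]

/-- The map of diagonal Clifford algebras induced by an extension of scalars `R → S`. -/
def extendScalars {w' : I → S} (hw : ∀ i, algebraMap R S (w i) = w' i) :
    DiagClifford w →ₐ[R] DiagClifford w' :=
  lift (gen w') (fun i => by rw [gen_mul_self, ← hw, ← IsScalarTower.algebraMap_apply])
    fun _ _ h => gen_mul_gen_of_ne w' h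

theorem extendScalars_gen {w' : I → S} (hw : ∀ i, algebraMap R S (w i) = w' i) (i : I) :
    extendScalars hw (gen w i) = gen w' i :=
  lift_gen ..

end Presentation

end DiagClifford

section Even

open CliffordAlgebra

variable {R M₁ M₂ : Type*} [CommRing R] [AddCommGroup M₁] [Module R M₁] [AddCommGroup M₂]
  [Module R M₂] {Q₁ : QuadraticForm R M₁} {Q₂ : QuadraticForm R M₂}

/-- The map of even Clifford algebras induced by an isometry. -/
def cliffordEvenMap (f : Q₁ →qᵢ Q₂) : even Q₁ →ₐ[R] even Q₂ :=
  even.lift Q₁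
    { bilin := (even.ι Q₂).bilin.compl₁₂ f.toLinearMap f.toLinearMap
      contract := fun m => by
        simpa using (even.ι Q₂).contract (f m)
      contract_mid := fun m₁ m₂ m₃ => by
        simpa using (even.ι Q₂).contract_mid (f m₁) (f m₂) (f m₃) }

theorem cliffordEvenMap_ι (f : Q₁ →qᵢ Q₂) (m₁ m₂ : M₁) :
    cliffordEvenMap f ((even.ι Q₁).bilin m₁ m₂) = (even.ι Q₂).bilin (f m₁) (f m₂) :=
  even.lift_ι ..

end Even

namespace DiagClifford

variable {R : Type*} [CommRing R] {n : ℕ} {w : Fin (n + 1) → R}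

/-- A diagonal form with first weight `-1`, as the orthogonal sum of its tail with `-x²`: the
shape required by `CliffordAlgebra.ofEven`. -/
def splitHead (hw : w 0 = -1) : QuadraticMap.weightedSumSquares R w →qᵢ
    CliffordAlgebra.EquivEven.Q' (QuadraticMap.weightedSumSquares R (Fin.tail w)) where
  toLinearMap := (LinearMap.funLeft R R Fin.succ).prod (LinearMap.proj 0)
  map_app' v := by
    simp [Fin.sum_univ_succ, hw, Fin.tail, LinearMap.funLeft_apply, add_comm]

theorem splitHead_apply (hw : w 0 = -1) (v : Fin (n + 1) → R) :
    splitHead hw v = (Fin.tail v, v 0) :=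
  rfl

/-- The map from the even part of a diagonal Clifford algebra with first weight `-1` to the
Clifford algebra of the remaining weights. -/
def evenToTail (hw : w 0 = -1) :
    CliffordAlgebra.even (QuadraticMap.weightedSumSquares R w) →ₐ[R] DiagClifford (Fin.tail w) :=
  (CliffordAlgebra.ofEven _).comp (cliffordEvenMap (splitHead hw))

theorem evenToTail_gen_zero_mul_gen_succ (hw : w 0 = -1) (j : Fin n) :
    evenToTail hw ⟨gen w 0 * gen w j.succ, CliffordAlgebra.ι_mul_ι_mem_evenOdd_zero _ _ _⟩ =
      gen (Fin.tail w) j := by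
  have h0 : splitHead hw (Pi.single 0 1) = (0, 1) := by
    ext <;> simp [splitHead_apply, Fin.tail]
  have hj : splitHead hw (Pi.single j.succ 1) = (Pi.single j 1, 0) := by
    ext <;> simp [splitHead_apply, Fin.tail, Pi.single_apply]
  change CliffordAlgebra.ofEven _ (cliffordEvenMap (splitHead hw) ((CliffordAlgebra.even.ι _).bilin
    (Pi.single 0 1) (Pi.single j.succ 1))) = _
  rw [cliffordEvenMap_ι, CliffordAlgebra.ofEven_ι, h0, hj]
  simp [gen]

end DiagClifford

/-- The relation `η + 1 = 0` on the monoid algebra `R[G]`. -/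
abbrev etaRel (R : Type*) {G : Type*} [CommRing R] [Monoid G] (η : G) :
    MonoidAlgebra R G → MonoidAlgebra R G → Prop :=
  fun a b => a = MonoidAlgebra.of R G η + 1 ∧ b = 0

/-- The quotient of the monoid algebra `R[G]` by `η + 1`, the universal `R`-algebra receiving a
homomorphism from `G` that sends `η` to `-1`. When `η` generates the kernel of a double cover, its
modules are the genuine representations of `G`. -/
abbrev GenuineAlgebra (R : Type*) {G : Type*} [CommRing R] [Monoid G] (η : G) :=
  RingQuot (etaRel R η)

namespace GenuineAlgebra

section Lift

variable {R G A : Type*} [CommRing R] [Monoid G] [Ring A] [Algebra R A]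

variable (R) in
/-- The canonical homomorphism from `G` to the quotient of `R[G]` by `η + 1`. -/
def of (η : G) : G →* GenuineAlgebra R η :=
  (RingQuot.mkAlgHom R (etaRel R η) : MonoidAlgebra R G →* GenuineAlgebra R η).comp
    (MonoidAlgebra.of R G)

variable (R) in
theorem of_self (η : G) : of R η η = -1 := by
  have h := RingQuot.mkAlgHom_rel R (s := etaRel R η) ⟨rfl, rfl⟩
  rw [map_add, map_one, map_zero] at h
  exact eq_neg_of_add_eq_zero_left h

variable {η : G}

/-- The universal property of the quotient of `R[G]` by `η + 1`. -/
def lift (f : G →* A) (hf : f η = -1) : GenuineAlgebra R η →ₐ[R] A :=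
  RingQuot.liftAlgHom R (s := etaRel R η) ⟨MonoidAlgebra.lift R A G f, by
    rintro _ _ ⟨rfl, rfl⟩
    rw [map_add, map_one, map_zero, MonoidAlgebra.lift_of, hf, neg_add_cancel]⟩

theorem lift_of (f : G →* A) (hf : f η = -1) (u : G) : lift (R := R) f hf (of R η u) = f u :=
  (RingQuot.liftAlgHom_mkAlgHom_apply R _ _ _).trans (MonoidAlgebra.lift_of _ _)

theorem algHom_ext {f g : GenuineAlgebra R η →ₐ[R] A}
    (h : (f : GenuineAlgebra R η →* A).comp (of R η) =
      (g : GenuineAlgebra R η →* A).comp (of R η)) : f = g :=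
  RingQuot.ringQuot_ext' R _ _ (MonoidAlgebra.algHom_ext' h (Subsingleton.elim _ _))

end Lift

section Clifford

variable {I R G : Type*} [Fintype I] [CommRing R]

/-- The map from the Clifford algebra of `-∑ i, x i ^ 2` determined by elements of `G` that satisfy
the Clifford relations with `η` in place of `-1`. -/
def ofClifford [Monoid G] {η : G} {γ : I → G} (hsq : ∀ i, γ i * γ i = η)
    (hanti : ∀ ⦃i j⦄, i ≠ j → γ i * γ j = η * (γ j * γ i)) :
    DiagClifford (fun _ : I => (-1 : R)) →ₐ[R] GenuineAlgebra R η :=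
  DiagClifford.lift (fun i => of R η (γ i))
    (fun i => by rw [← map_mul, hsq, of_self, map_neg, map_one])
    fun i j hij => by
      rw [← map_mul, hanti hij, map_mul, of_self, map_mul]
      exact neg_one_mul (of R η (γ j) * of R η (γ i))

theorem ofClifford_gen [DecidableEq I] [Monoid G] {η : G} {γ : I → G} (hsq : ∀ i, γ i * γ i = η)
    (hanti : ∀ ⦃i j⦄, i ≠ j → γ i * γ j = η * (γ j * γ i)) (i : I) :
    ofClifford (R := R) hsq hanti (DiagClifford.gen _ i) = of R η (γ i) :=
  DiagClifford.lift_gen ..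

/-- If `G` is generated by elements satisfying the Clifford relations with `η` in place of `-1`, and
maps to the Clifford algebra accordingly, then the quotient of `R[G]` by `η + 1` is that Clifford
algebra. -/
def equivClifford [DecidableEq I] [Group G] {η : G} {γ : I → G} (hsq : ∀ i, γ i * γ i = η)
    (hanti : ∀ ⦃i j⦄, i ≠ j → γ i * γ j = η * (γ j * γ i))
    (hgen : Subgroup.closure (Set.range γ) = ⊤)
    (ρ : G →* DiagClifford (fun _ : I => (-1 : R))) (hρη : ρ η = -1)
    (hργ : ∀ i, ρ (γ i) = DiagClifford.gen _ i) :
    GenuineAlgebra R η ≃ₐ[R] DiagClifford (fun _ : I => (-1 : R)) :=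
  AlgEquiv.ofAlgHom (lift ρ hρη) (ofClifford hsq hanti)
    (DiagClifford.algHom_ext fun i => by simp [ofClifford_gen, lift_of, hργ])
    (algHom_ext (MonoidHom.eq_of_eqOn_dense hgen (Set.forall_mem_range.2 fun i => by
      simp [ofClifford_gen, lift_of, hργ])))

end Clifford

end GenuineAlgebra

section Telescoping

variable {G : Type*} [Group G] {n : ℕ}

theorem closure_range_inv_succ_mul_castSucc (x : Fin (n + 1) → G) :
    Subgroup.closure (Set.range fun i : Fin n => (x i.succ)⁻¹ * x i.castSucc) =
      Subgroup.closure (Set.range fun j : Fin n => (x j.succ)⁻¹ * x 0) := by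
  refine le_antisymm ?_ ?_ <;> rw [Subgroup.closure_le, Set.range_subset_iff]
  · have hmem (k : Fin (n + 1)) :
        (x k)⁻¹ * x 0 ∈ Subgroup.closure (Set.range fun j : Fin n => (x j.succ)⁻¹ * x 0) := by
      cases k using Fin.cases with
      | zero => simp
      | succ j => exact Subgroup.subset_closure ⟨j, rfl⟩
    intro i
    simpa using div_mem (hmem i.succ) (hmem i.castSucc)
  · set H := Subgroup.closure (Set.range fun i : Fin n => (x i.succ)⁻¹ * x i.castSucc)
    have hmem (k : Fin (n + 1)) : (x k)⁻¹ * x 0 ∈ H := by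
      induction k using Fin.induction with
      | zero => simp
      | succ i ih =>
        have hstep : (x i.succ)⁻¹ * x i.castSucc ∈ H := Subgroup.subset_closure ⟨i, rfl⟩
        simpa [mul_assoc] using mul_mem hstep ih
    exact fun j => hmem j.succ

theorem closure_range_codRestrict {I : Type*} {H : Subgroup G} {γ : I → H}
    (h : Subgroup.closure (Set.range fun i => (γ i : G)) = H) :
    Subgroup.closure (Set.range γ) = ⊤ := by
  refine Subgroup.map_injective H.subtype_injective ?_
  rw [MonoidHom.map_closure, ← Set.range_comp, ← MonoidHom.range_eq_map, Subgroup.range_subtype]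
  exact h

end Telescoping

theorem eCl_mul_self (m : ℕ) (i : Fin m) : eCl m i * eCl m i = -1 :=
  (DiagClifford.gen_mul_self _ i).trans (by rw [map_neg, map_one]; rfl)

theorem eCl_mul_eCl_of_ne {m : ℕ} {i j : Fin m} (h : i ≠ j) :
    eCl m i * eCl m j = -(eCl m j * eCl m i) :=
  DiagClifford.gen_mul_gen_of_ne _ h

/-- The generator `e_i` of `Cl_m` as a unit. -/
def eUnit (m : ℕ) (i : Fin m) : (Cl m)ˣ where
  val := eCl m i
  inv := -eCl m i
  val_inv := by rw [mul_neg, eCl_mul_self, neg_neg]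
  inv_val := by rw [neg_mul, eCl_mul_self, neg_neg]

theorem coe_inv_eUnit_mul_eUnit {m : ℕ} {i j : Fin m} (h : i ≠ j) :
    (((eUnit m j)⁻¹ * eUnit m i : (Cl m)ˣ) : Cl m) = eCl m i * eCl m j := by
  rw [eCl_mul_eCl_of_ne h, ← neg_mul]
  rfl

theorem Mgrp_eq_closure_consecutive (n : ℕ) :
    Mgrp n = Subgroup.closure (Set.range fun i : Fin n =>
      (eUnit (n + 1) i.succ)⁻¹ * eUnit (n + 1) i.castSucc) := by
  have h (i : Fin n) := coe_inv_eUnit_mul_eUnit i.castSucc_lt_succ.ne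
  rw [Mgrp]
  congr 1
  ext u
  simp only [Set.mem_ofPred_eq, Set.mem_range, Units.ext_iff, h, eq_comm]

/-- The elements `e_1 e_{j+1}`, which generate `M_n`; written `e_{j+1}⁻¹ e_1` so that products with
the generators `e_{i+1}⁻¹ e_i` telescope. -/
def mgrpGen (n : ℕ) (j : Fin n) : (Cl (n + 1))ˣ :=
  (eUnit (n + 1) j.succ)⁻¹ * eUnit (n + 1) 0

theorem closure_range_mgrpGen (n : ℕ) : Subgroup.closure (Set.range (mgrpGen n)) = Mgrp n :=
  (closure_range_inv_succ_mul_castSucc _).symm.trans (Mgrp_eq_closure_consecutive n).symm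

theorem coe_mgrpGen (n : ℕ) (j : Fin n) :
    (mgrpGen n j : Cl (n + 1)) = eCl (n + 1) 0 * eCl (n + 1) j.succ :=
  coe_inv_eUnit_mul_eUnit j.succ_ne_zero.symm

theorem coe_mgrpGen_mul_mgrpGen (n : ℕ) (i j : Fin n) :
    (mgrpGen n i * mgrpGen n j : Cl (n + 1)) = eCl (n + 1) i.succ * eCl (n + 1) j.succ := by
  rw [coe_mgrpGen, coe_mgrpGen, eCl_mul_eCl_of_ne i.succ_ne_zero.symm, neg_mul, mul_assoc,
    ← mul_assoc (eCl _ 0), eCl_mul_self, neg_one_mul, mul_neg, neg_neg]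

theorem eCl_mul_eCl_mem_even {m : ℕ} (i j : Fin m) :
    eCl m i * eCl m j ∈ CliffordAlgebra.even (Qneg m) :=
  CliffordAlgebra.ι_mul_ι_mem_evenOdd_zero _ _ _

theorem Mgrp_le_units_even (n : ℕ) :
    Mgrp n ≤ (CliffordAlgebra.even (Qneg (n + 1))).toSubmonoid.units := by
  have hmem {i j : Fin (n + 1)} (h : i ≠ j) :
      (((eUnit _ j)⁻¹ * eUnit _ i : (Cl (n + 1))ˣ) : Cl (n + 1)) ∈
        CliffordAlgebra.even (Qneg (n + 1)) := by
    rw [coe_inv_eUnit_mul_eUnit h]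
    exact eCl_mul_eCl_mem_even i j
  rw [← closure_range_mgrpGen, Subgroup.closure_le, Set.range_subset_iff]
  refine fun j => ⟨hmem j.succ_ne_zero.symm, ?_⟩
  simpa [mgrpGen] using hmem j.succ_ne_zero

section MgrpHom

variable (S : Type*) [CommRing S] [Algebra ℝ S]

/-- The map from the even part of `Cl_{n+1}`, through `Cl_n`, to the Clifford algebra of
`-∑ i, z i ^ 2` on `S^n`, with `e_1 e_{j+1} ↦ e_j`. -/
def evenToScalars (n : ℕ) :
    CliffordAlgebra.even (Qneg (n + 1)) →ₐ[ℝ] DiagClifford (fun _ : Fin n => (-1 : S)) :=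
  (DiagClifford.extendScalars fun _ => by simp [Fin.tail]).comp
    (DiagClifford.evenToTail (w := fun _ => -1) rfl)

theorem evenToScalars_eCl_zero_mul_eCl_succ {n : ℕ} (j : Fin n) :
    evenToScalars S n ⟨eCl (n + 1) 0 * eCl (n + 1) j.succ, eCl_mul_eCl_mem_even _ _⟩ =
      DiagClifford.gen _ j := by
  have hw (i : Fin n) : algebraMap ℝ S (Fin.tail (fun _ => (-1 : ℝ)) i) = -1 := by simp [Fin.tail]
  have h := DiagClifford.evenToTail_gen_zero_mul_gen_succ (w := fun _ => (-1 : ℝ)) rfl j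
  exact (congrArg (DiagClifford.extendScalars hw) h).trans (DiagClifford.extendScalars_gen hw j)

/-- The homomorphism from `M_n` to the Clifford algebra of `-∑ i, z i ^ 2` on `S^n` sending
`e_1 e_{j+1}` to `e_j`. -/
def cliffordHom (n : ℕ) : Mgrp n →* DiagClifford (fun _ : Fin n => (-1 : S)) :=
  (evenToScalars S n : _ →* _).comp <|
    ((Units.coeHom (Cl (n + 1))).comp (Mgrp n).subtype).codRestrict
      (CliffordAlgebra.even (Qneg (n + 1))) fun u => (Mgrp_le_units_even n u.2).1

theorem cliffordHom_eq_neg_one {n : ℕ} {η : Mgrp n}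
    (hη : ((η : (Cl (n + 1))ˣ) : Cl (n + 1)) = -1) : cliffordHom S n η = -1 := by
  rw [← map_one (evenToScalars S n), ← map_neg]
  exact congrArg (evenToScalars S n) (Subtype.ext hη)

theorem cliffordHom_of_coe_eq_mgrpGen {n : ℕ} {u : Mgrp n} {j : Fin n}
    (hu : (u : (Cl (n + 1))ˣ) = mgrpGen n j) : cliffordHom S n u = DiagClifford.gen _ j := by
  rw [← evenToScalars_eCl_zero_mul_eCl_succ]
  exact congrArg (evenToScalars S n) (Subtype.ext ((congrArg _ hu).trans (coe_mgrpGen n j)))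

theorem groupAlgebra_quotient_iso_clifford_general {n : ℕ} {η : Mgrp n}
    (hη : ((η : (Cl (n + 1))ˣ) : Cl (n + 1)) = -1) :
    Nonempty (GenuineAlgebra S η ≃ₐ[S] DiagClifford (fun _ : Fin n => (-1 : S))) := by
  let γ : Fin n → Mgrp n := fun j =>
    ⟨mgrpGen n j, closure_range_mgrpGen n ▸ Subgroup.subset_closure ⟨j, rfl⟩⟩
  have hsq (i : Fin n) : γ i * γ i = η :=
    Subtype.ext <| Units.ext <|
      (coe_mgrpGen_mul_mgrpGen n i i).trans <| (eCl_mul_self _ _).trans hη.symm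
  have hanti : ∀ ⦃i j⦄, i ≠ j → γ i * γ j = η * (γ j * γ i) := fun i j hij =>
    Subtype.ext <| Units.ext <| calc
      (mgrpGen n i * mgrpGen n j : Cl (n + 1)) = eCl _ i.succ * eCl _ j.succ :=
        coe_mgrpGen_mul_mgrpGen n i j
      _ = -(mgrpGen n j * mgrpGen n i) := by
        rw [eCl_mul_eCl_of_ne ((Fin.succ_injective n).ne hij), coe_mgrpGen_mul_mgrpGen]
      _ = (η : (Cl (n + 1))ˣ) * (mgrpGen n j * mgrpGen n i) := by rw [hη, neg_one_mul]
  have hgen := closure_range_codRestrict (γ := γ) (closure_range_mgrpGen n)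
  exact ⟨GenuineAlgebra.equivClifford hsq hanti hgen (cliffordHom S n)
    (cliffordHom_eq_neg_one S hη) fun _ => cliffordHom_of_coe_eq_mgrpGen S rfl⟩

end MgrpHom

theorem groupAlgebra_quotient_iso_clifford (n : ℕ) (hn : 1 ≤ n)
    (η : ↥(Mgrp n)) (hη : ((η : (Cl (n + 1))ˣ) : Cl (n + 1)) = -1) :
    Nonempty
      ((RingQuot (fun a b : MonoidAlgebra ℂ ↥(Mgrp n) =>
          a = MonoidAlgebra.of ℂ ↥(Mgrp n) η + 1 ∧ b = 0))
        ≃ₐ[ℂ] CliffordAlgebra (QnegC n)) :=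
  groupAlgebra_quotient_iso_clifford_general ℂ hη
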